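/- arXiv:2601.17347 — 2 statements merged into one kernel-verified Lean document; each statement's English description precedes it below -/
import Mathlib

section
/- Let 0<α<1 and let f be a Schwartz function on ℝ. Then the forward-shift Marchaud operator f ↦ C_α ∫₀^∞ [f(ξ) − f(ξ+y)] / y^{1+α} dy, with C_α = −1/Γ(−α), has Fourier symbol (−ik)^α; that is, its Fourier transform at k equals (−ik)^α f̂(k), with the principal branch. -/
/-!
With `s = -ik`, Fubini and the shift rule `FT (f (· + y)) k = e^{iky} FT f k` reduce the claim to
`∫₀^∞ (1 - e^{-sy}) y^{-1-α} dy = -Γ(-α) s^α` (`symbolIntegral_neg_I_mul`).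

Fubini applies because the `L¹` norm of `f - f (· + y)` is at most a multiple of `min 1 y`
(`exists_integral_norm_sub_shift_le`), and `min 1 y / y ^ (1 + α)` is integrable on `(0, ∞)`.

The symbol integral `G s` is continuous on `Re s ≥ 0`. For `Re s > 0` its derivative is
`H s = ∫₀^∞ y^{-α} e^{-sy} dy`, while integration by parts gives `G s = (s / α) H s`. Hence
`s G' = α G`, so `G s = s^α G 1`; and `G 1 = Γ(1 - α) / α = -Γ(-α)`. Letting `s` approach the
imaginary axis from the right gives the value at `-ik`.
-/

open MeasureTheory

noncomputable section

/-- Fourier transform with convention `f̂(k) = ∫ f(ξ) e^{-ikξ} dξ`. -/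
def FT (f : ℝ → ℂ) (k : ℝ) : ℂ :=
  ∫ ξ : ℝ, f ξ * Complex.exp (-(Complex.I * (k : ℂ) * (ξ : ℂ)))

/-- The forward-shift Marchaud operator `C_α ∫₀^∞ (f(ξ) − f(ξ+y)) y^{−1−α} dy` with
`C_α = −1/Γ(−α)`. -/
def marchaudForward (α : ℝ) (f : ℝ → ℂ) (ξ : ℝ) : ℂ :=
  ((-1 / Real.Gamma (-α) : ℝ) : ℂ) *
    ∫ y in Set.Ioi (0 : ℝ), (f ξ - f (ξ + y)) / ((y ^ (1 + α) : ℝ) : ℂ)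

open Filter Topology

/-! ### The symbol integral -/

/-- This weight dominates both the symbol integrand and, after integration in `ξ`, the double
integral in Fubini's theorem: it is `y ^ (-α)` for `y ≤ 1` and `y ^ (-1 - α)` for `y ≥ 1`. -/
lemma integrableOn_weight {α : ℝ} (hα0 : 0 < α) (hα1 : α < 1) :
    IntegrableOn (fun y : ℝ => min 1 y / y ^ (1 + α)) (Set.Ioi 0) := by
  rw [← Set.Ioc_union_Ioi_eq_Ioi (zero_le_one (α := ℝ))]
  refine IntegrableOn.union ?_ ?_
  · have h : IntegrableOn (fun y : ℝ => y ^ (-α)) (Set.Ioc 0 1) := by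
      rw [← intervalIntegrable_iff_integrableOn_Ioc_of_le zero_le_one]
      exact intervalIntegral.intervalIntegrable_rpow' (by linarith)
    refine h.congr_fun (fun y hy => ?_) measurableSet_Ioc
    simp only
    rw [min_eq_right hy.2, Real.rpow_add hy.1, Real.rpow_one, Real.rpow_neg hy.1.le]
    have := hy.1.ne'
    field_simp
  · have h : IntegrableOn (fun y : ℝ => y ^ (-(1 + α))) (Set.Ioi 1) :=
      integrableOn_Ioi_rpow_of_lt (by linarith) zero_lt_one
    refine h.congr_fun (fun y hy => ?_) measurableSet_Ioi
    have hy' : (1 : ℝ) < y := hy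
    simp only
    rw [min_eq_left hy'.le, Real.rpow_neg (by linarith), one_div]

lemma norm_one_sub_exp_neg_le {z : ℂ} (hz : 0 ≤ z.re) : ‖1 - Complex.exp (-z)‖ ≤ ‖z‖ := by
  have hconv : Convex ℝ {w : ℂ | 0 ≤ w.re} := convex_halfSpace_re_ge 0
  have h := hconv.norm_image_sub_le_of_norm_hasDerivWithin_le (𝕜 := ℂ)
    (f := fun w => Complex.exp (-w)) (f' := fun w => Complex.exp (-w) * (-1)) (C := 1)
    (x := z) (y := 0)
    (fun w _ => ((Complex.hasDerivAt_exp (-w)).comp w (hasDerivAt_neg w)).hasDerivWithinAt)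
    (fun w hw => by
      have : (0 : ℝ) ≤ w.re := hw
      simpa [Complex.norm_exp] using this) hz (by simp)
  simpa using h

lemma norm_one_sub_exp_neg_mul_le {s : ℂ} (hs : 0 ≤ s.re) {y : ℝ} (hy : 0 < y) :
    ‖1 - Complex.exp (-(s * y))‖ ≤ (2 + ‖s‖) * min 1 y := by
  have hre : 0 ≤ (s * y).re := by simpa using mul_nonneg hs hy.le
  have h1 := norm_one_sub_exp_neg_le hre
  have h2 : ‖1 - Complex.exp (-(s * y))‖ ≤ 2 := by
    refine (norm_sub_le _ _).trans ?_
    have : ‖Complex.exp (-(s * y))‖ ≤ 1 := by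
      rw [Complex.norm_exp, Real.exp_le_one_iff, Complex.neg_re]
      linarith
    rw [norm_one]; linarith
  rw [norm_mul, Complex.norm_real, Real.norm_of_nonneg hy.le] at h1
  have := norm_nonneg s
  rcases le_total 1 y with h | h
  · rw [min_eq_left h]; linarith
  · rw [min_eq_right h]; nlinarith

/-- The symbol integral `∫₀^∞ (1 - e^{-sy}) y^{-1-α} dy`, for `Re s ≥ 0`. -/
def symbolIntegral (α : ℝ) (s : ℂ) : ℂ :=
  ∫ y in Set.Ioi (0 : ℝ), (1 - Complex.exp (-(s * y))) / ((y ^ (1 + α) : ℝ) : ℂ)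

lemma measurable_symbolIntegrand (α : ℝ) (s : ℂ) :
    Measurable fun y : ℝ => (1 - Complex.exp (-(s * y))) / ((y ^ (1 + α) : ℝ) : ℂ) := by
  fun_prop

lemma norm_symbolIntegrand_le (α : ℝ) {s : ℂ} (hs : 0 ≤ s.re) {y : ℝ} (hy : 0 < y) :
    ‖(1 - Complex.exp (-(s * y))) / ((y ^ (1 + α) : ℝ) : ℂ)‖ ≤
      (2 + ‖s‖) * (min 1 y / y ^ (1 + α)) := by
  have hp : 0 < y ^ (1 + α) := Real.rpow_pos_of_pos hy _
  rw [norm_div, Complex.norm_real, Real.norm_of_nonneg hp.le, ← mul_div_assoc]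
  gcongr
  exact norm_one_sub_exp_neg_mul_le hs hy

lemma integrableOn_symbolIntegrand {α : ℝ} (hα0 : 0 < α) (hα1 : α < 1) {s : ℂ} (hs : 0 ≤ s.re) :
    IntegrableOn (fun y : ℝ => (1 - Complex.exp (-(s * y))) / ((y ^ (1 + α) : ℝ) : ℂ))
      (Set.Ioi 0) := by
  refine Integrable.mono' ((integrableOn_weight hα0 hα1).const_mul (2 + ‖s‖))
    (measurable_symbolIntegrand α s).aestronglyMeasurable ?_
  filter_upwards [ae_restrict_mem measurableSet_Ioi] with y hy
  exact norm_symbolIntegrand_le α hs hy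

lemma continuousOn_symbolIntegral {α : ℝ} (hα0 : 0 < α) (hα1 : α < 1) :
    ContinuousOn (symbolIntegral α) {s : ℂ | 0 ≤ s.re} := by
  intro s₀ _
  have hev : ∀ᶠ s in 𝓝[{s : ℂ | 0 ≤ s.re}] s₀, ‖s‖ ≤ ‖s₀‖ + 1 := by
    apply nhdsWithin_le_nhds
    exact (continuous_norm.tendsto s₀).eventually (ge_mem_nhds (by linarith))
  refine continuousWithinAt_of_dominated
    (bound := fun y => (2 + (‖s₀‖ + 1)) * (min 1 y / y ^ (1 + α)))
    (Eventually.of_forall fun s => (measurable_symbolIntegrand α s).aestronglyMeasurable)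
    ?_ ((integrableOn_weight hα0 hα1).const_mul _) ?_
  · filter_upwards [hev, self_mem_nhdsWithin] with s hs hre
    filter_upwards [ae_restrict_mem measurableSet_Ioi] with y hy
    have hy' : (0 : ℝ) < y := hy
    refine (norm_symbolIntegrand_le α hre hy).trans ?_
    gcongr
  · refine Eventually.of_forall fun y => Continuous.continuousWithinAt ?_
    fun_prop

lemma integrableOn_rpow_mul_exp {α : ℝ} (hα1 : α < 1) {c : ℝ} (hc : 0 < c) :
    IntegrableOn (fun y : ℝ => y ^ (-α) * Real.exp (-(c * y))) (Set.Ioi 0) := by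
  have := integrableOn_rpow_mul_exp_neg_mul_rpow (s := -α) (p := 1) (b := c)
    (by linarith) one_pos hc
  simpa [Real.rpow_one] using this

/-- Differentiation under the integral sign, dominated on the half-plane `Re w > Re s / 2`. -/
lemma hasDerivAt_symbolIntegral {α : ℝ} (hα0 : 0 < α) (hα1 : α < 1) {s : ℂ} (hs : 0 < s.re) :
    IntegrableOn (fun y : ℝ => ((y ^ (-α) : ℝ) : ℂ) * Complex.exp (-(s * y))) (Set.Ioi 0) ∧
    HasDerivAt (symbolIntegral α)
      (∫ y in Set.Ioi (0 : ℝ), ((y ^ (-α) : ℝ) : ℂ) * Complex.exp (-(s * y))) s := by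
  have hc : 0 < s.re / 2 := by linarith
  refine hasDerivAt_integral_of_dominated_loc_of_deriv_le (𝕜 := ℂ)
    (s := {w : ℂ | s.re / 2 < w.re})
    (bound := fun y => y ^ (-α) * Real.exp (-(s.re / 2 * y)))
    (F := fun (w : ℂ) (y : ℝ) => (1 - Complex.exp (-(w * y))) / ((y ^ (1 + α) : ℝ) : ℂ))
    (F' := fun (w : ℂ) (y : ℝ) => ((y ^ (-α) : ℝ) : ℂ) * Complex.exp (-(w * y)))
    ?_ ?_ ?_ ?_ ?_ ?_ ?_
  · exact (isOpen_lt continuous_const Complex.continuous_re).mem_nhds (by simp; linarith)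
  · exact Eventually.of_forall fun w => (measurable_symbolIntegrand α w).aestronglyMeasurable
  · exact integrableOn_symbolIntegrand hα0 hα1 hs.le
  · exact (by fun_prop : Measurable _).aestronglyMeasurable
  · filter_upwards [ae_restrict_mem measurableSet_Ioi] with y hy w hw
    have hy' : (0 : ℝ) < y := hy
    have hw' : s.re / 2 < w.re := hw
    have hp : 0 < y ^ (-α) := Real.rpow_pos_of_pos hy _
    rw [norm_mul, Complex.norm_real, Real.norm_of_nonneg hp.le, Complex.norm_exp]
    have : (-(w * (y : ℂ))).re = -(w.re * y) := by simp
    rw [this]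
    gcongr
  · exact integrableOn_rpow_mul_exp hα1 hc
  · filter_upwards [ae_restrict_mem measurableSet_Ioi] with y hy w _
    have hy' : (0 : ℝ) < y := hy
    have h1 : HasDerivAt (fun w : ℂ => -(w * (y : ℂ))) (-(y : ℂ)) w := by
      simpa using! ((hasDerivAt_id w).mul_const (y : ℂ)).neg
    have h2 := (h1.cexp.const_sub 1).div_const ((y ^ (1 + α) : ℝ) : ℂ)
    refine h2.congr_deriv ?_
    have e : (y ^ (-α) : ℝ) = y / y ^ (1 + α) := by
      rw [Real.rpow_add hy', Real.rpow_one, Real.rpow_neg hy'.le]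
      field_simp
    rw [e]; push_cast; ring

/-- Integration by parts with `v = -y ^ (-α) / α`. -/
lemma symbolIntegral_eq {α : ℝ} (hα0 : 0 < α) (hα1 : α < 1) {s : ℂ} (hs : 0 < s.re) :
    symbolIntegral α s =
      s / α * ∫ y in Set.Ioi (0 : ℝ), ((y ^ (-α) : ℝ) : ℂ) * Complex.exp (-(s * y)) := by
  have hαC : (α : ℂ) ≠ 0 := by exact_mod_cast hα0.ne'
  have hint := (hasDerivAt_symbolIntegral hα0 hα1 hs).1
  have hu : ∀ y ∈ Set.Ioi (0 : ℝ), HasDerivAt (fun y : ℝ => 1 - Complex.exp (-(s * y)))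
      (s * Complex.exp (-(s * y))) y := by
    intro y _
    have h1 : HasDerivAt (fun y : ℝ => -(s * (y : ℂ))) (-s) y := by
      simpa using! ((Complex.ofRealCLM.hasDerivAt (x := y)).const_mul s).neg
    refine (h1.cexp.const_sub 1).congr_deriv ?_
    ring
  have hv : ∀ y ∈ Set.Ioi (0 : ℝ), HasDerivAt (fun y : ℝ => ((-(y ^ (-α)) / α : ℝ) : ℂ))
      (((y ^ (1 + α))⁻¹ : ℝ) : ℂ) y := by
    intro y hy
    have hy' : (0 : ℝ) < y := hy
    have h := (((Real.hasDerivAt_rpow_const (p := -α) (Or.inl hy'.ne')).neg).div_const α)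
    refine (HasDerivAt.ofReal_comp h).congr_deriv ?_
    congr 1
    rw [← Real.rpow_neg hy'.le, show -α - 1 = -(1 + α) by ring]
    field_simp
  have hbound : ∀ y : ℝ, 0 < y → ‖(1 - Complex.exp (-(s * y))) * ((-(y ^ (-α)) / α : ℝ) : ℂ)‖ ≤
      (2 + ‖s‖) / α * (min 1 y * y ^ (-α)) := by
    intro y hy
    have hp : 0 < y ^ (-α) := Real.rpow_pos_of_pos hy _
    have := norm_one_sub_exp_neg_mul_le hs.le hy
    rw [norm_mul, Complex.norm_real, Real.norm_eq_abs, abs_div, abs_neg, abs_of_pos hp,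
      abs_of_pos hα0]
    calc _ ≤ ((2 + ‖s‖) * min 1 y) * (y ^ (-α) / α) := by gcongr
      _ = _ := by ring
  have hparts := integral_Ioi_mul_deriv_eq_deriv_mul (A := ℂ) (a := 0) (a' := 0) (b' := 0)
    hu hv ?_ ?_ ?_ ?_
  · rw [sub_zero, zero_sub] at hparts
    calc symbolIntegral α s = _ := by
          simp only [symbolIntegral, div_eq_mul_inv, ← Complex.ofReal_inv]
      _ = _ := hparts
      _ = _ := by
          rw [← integral_neg, ← integral_const_mul]
          congr 1
          ext y
          push_cast
          field_simp
  · have := integrableOn_symbolIntegrand hα0 hα1 hs.le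
    simpa only [div_eq_mul_inv, ← Complex.ofReal_inv] using! this
  · refine (hint.const_mul (-s / α)).congr (Eventually.of_forall fun y => ?_)
    simp only [Pi.mul_apply]
    push_cast
    field_simp
  · have hlim : Tendsto (fun y : ℝ => (2 + ‖s‖) / α * y ^ (1 - α)) (𝓝[>] 0) (𝓝 0) := by
      have h : Tendsto (fun y : ℝ => y ^ (1 - α)) (𝓝 0) (𝓝 ((0 : ℝ) ^ (1 - α))) :=
        (Real.continuousAt_rpow_const 0 (1 - α) (Or.inr (by linarith))).tendsto
      rw [Real.zero_rpow (by linarith)] at h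
      simpa using (h.mono_left nhdsWithin_le_nhds).const_mul ((2 + ‖s‖) / α)
    refine squeeze_zero_norm' ?_ hlim
    filter_upwards [self_mem_nhdsWithin] with y hy
    have hy' : (0 : ℝ) < y := hy
    refine (hbound y hy).trans ?_
    rw [sub_eq_add_neg, Real.rpow_add hy', Real.rpow_one]
    gcongr
    exact min_le_right _ _
  · have hlim : Tendsto (fun y : ℝ => (2 + ‖s‖) / α * y ^ (-α)) atTop (𝓝 0) := by
      simpa using (tendsto_rpow_neg_atTop hα0).const_mul ((2 + ‖s‖) / α)
    refine squeeze_zero_norm' ?_ hlim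
    filter_upwards [eventually_gt_atTop 0] with y hy
    refine (hbound y hy).trans ?_
    have hp : 0 < y ^ (-α) := Real.rpow_pos_of_pos hy _
    gcongr
    exact mul_le_of_le_one_left hp.le (min_le_left _ _)

lemma symbolIntegral_one {α : ℝ} (hα0 : 0 < α) (hα1 : α < 1) :
    symbolIntegral α 1 = ((-Real.Gamma (-α) : ℝ) : ℂ) := by
  rw [symbolIntegral_eq hα0 hα1 (by simp)]
  have hG : ∫ y in Set.Ioi (0 : ℝ), ((y ^ (-α) : ℝ) : ℂ) * Complex.exp (-(1 * y)) =
      ((Real.Gamma (-α + 1) : ℝ) : ℂ) := by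
    rw [Real.Gamma_eq_integral (by linarith), ← integral_complex_ofReal]
    congr 1
    ext y
    push_cast
    simp [mul_comm]
  rw [hG, Real.Gamma_add_one (by linarith)]
  have hαC : (α : ℂ) ≠ 0 := by exact_mod_cast hα0.ne'
  push_cast
  field_simp

/-- In the open half-plane `Re s > 0`, the function `G = symbolIntegral α` solves `s G' = α G`,
so `G s * s ^ (-α)` is constant. -/
lemma symbolIntegral_of_re_pos {α : ℝ} (hα0 : 0 < α) (hα1 : α < 1) {s : ℂ} (hs : 0 < s.re) :
    symbolIntegral α s = s ^ (α : ℂ) * symbolIntegral α 1 := by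
  have hαC : (α : ℂ) ≠ 0 := by exact_mod_cast hα0.ne'
  have hne : ∀ w : ℂ, 0 < w.re → w ≠ 0 := by rintro w hw rfl; simp at hw
  have hd : ∀ w : ℂ, 0 < w.re →
      HasDerivAt (fun w => symbolIntegral α w * w ^ (-(α : ℂ))) 0 w := by
    intro w hw
    have h1 := (hasDerivAt_symbolIntegral hα0 hα1 hw).2
    have h2 := (hasDerivAt_id w).cpow_const (c := -(α : ℂ)) (Or.inl hw)
    refine (h1.mul h2).congr_deriv ?_
    rw [symbolIntegral_eq hα0 hα1 hw]
    have hw0 := hne w hw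
    simp only [id]
    rw [Complex.cpow_sub _ _ hw0, Complex.cpow_one]
    field_simp
    ring
  have hconst := (convex_halfSpace_re_gt 0).norm_image_sub_le_of_norm_hasDerivWithin_le (𝕜 := ℂ)
    (f := fun w => symbolIntegral α w * w ^ (-(α : ℂ))) (f' := fun _ => 0) (C := 0)
    (x := 1) (y := s) (fun w hw => (hd w hw).hasDerivWithinAt) (by simp)
    (show (0 : ℝ) < (1 : ℂ).re by simp) hs
  rw [zero_mul, norm_le_zero_iff, sub_eq_zero, Complex.one_cpow, mul_one] at hconst
  rw [← hconst, Complex.cpow_neg]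
  have : s ^ (α : ℂ) ≠ 0 := by simp [Complex.cpow_eq_zero_iff, hne s hs]
  field_simp

/-- The symbol on the boundary line, by continuity from `Re s > 0`; the principal branch is
continuous at `-ik` for `k ≠ 0`. -/
lemma symbolIntegral_neg_I_mul {α : ℝ} (hα0 : 0 < α) (hα1 : α < 1) (k : ℝ) :
    symbolIntegral α (-(Complex.I * k)) =
      (-(Complex.I * (k : ℂ))) ^ (α : ℂ) * ((-Real.Gamma (-α) : ℝ) : ℂ) := by
  rw [← symbolIntegral_one hα0 hα1]
  rcases eq_or_ne k 0 with rfl | hk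
  · have hαC : (α : ℂ) ≠ 0 := by exact_mod_cast hα0.ne'
    simp [symbolIntegral, Complex.zero_cpow hαC]
  have hpath : Tendsto (fun ε : ℝ => (ε : ℂ) + -(Complex.I * k)) (𝓝[>] 0)
      (𝓝 (-(Complex.I * k))) := by
    have : Continuous fun ε : ℝ => (ε : ℂ) + -(Complex.I * k) := by fun_prop
    have h := this.tendsto 0
    simp only [Complex.ofReal_zero, zero_add] at h
    exact h.mono_left nhdsWithin_le_nhds
  have hL : Tendsto (fun ε : ℝ => symbolIntegral α ((ε : ℂ) + -(Complex.I * k))) (𝓝[>] 0)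
      (𝓝 (symbolIntegral α (-(Complex.I * k)))) := by
    refine (continuousOn_symbolIntegral hα0 hα1 (-(Complex.I * k)) (by simp)).tendsto.comp ?_
    refine tendsto_nhdsWithin_iff.2 ⟨hpath, ?_⟩
    filter_upwards [self_mem_nhdsWithin] with ε hε
    have hε' : (0 : ℝ) < ε := hε
    simpa using hε'.le
  have hR : Tendsto (fun ε : ℝ => ((ε : ℂ) + -(Complex.I * k)) ^ (α : ℂ) * symbolIntegral α 1)
      (𝓝[>] 0) (𝓝 ((-(Complex.I * (k : ℂ))) ^ (α : ℂ) * symbolIntegral α 1)) := by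
    have hc : ContinuousAt (fun z : ℂ => z ^ (α : ℂ)) (-(Complex.I * k)) :=
      continuousAt_cpow_const (Or.inr (by simpa using hk))
    exact (hc.tendsto.comp hpath).mul_const _
  refine tendsto_nhds_unique (hL.congr' ?_) hR
  filter_upwards [self_mem_nhdsWithin] with ε hε
  have hε' : (0 : ℝ) < ε := hε
  exact symbolIntegral_of_re_pos hα0 hα1 (by simpa using hε')

/-! ### Fubini for the double integral -/

/-- The `L¹` modulus of continuity of a Schwartz function. For `y ≤ 1` it is linear in `y`, because
`f'` is bounded on `[ξ, ξ + 1]` by a multiple of `1 / (1 + ξ ^ 2)`. -/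
lemma exists_integral_norm_sub_shift_le (f : SchwartzMap ℝ ℂ) :
    ∃ M : ℝ, ∀ y : ℝ, 0 < y → ∫ ξ : ℝ, ‖f ξ - f (ξ + y)‖ ≤ M * min 1 y := by
  obtain ⟨A, hA0, hA⟩ := (SchwartzMap.derivCLM ℝ ℂ f).decay 0 0
  obtain ⟨B, hB0, hB⟩ := (SchwartzMap.derivCLM ℝ ℂ f).decay 2 0
  have hf : Integrable (f : ℝ → ℂ) := f.integrable
  have hdecay : ∀ x : ℝ, ‖deriv f x‖ * (1 + x ^ 2) ≤ A + B := by
    intro x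
    have h1 := hA x
    have h2 := hB x
    simp only [norm_iteratedFDeriv_zero, SchwartzMap.derivCLM_apply, pow_zero, one_mul,
      Real.norm_eq_abs, sq_abs] at h1 h2
    linarith
  have hsmall : ∀ y : ℝ, 0 < y → y ≤ 1 → ∀ ξ : ℝ,
      ‖f ξ - f (ξ + y)‖ ≤ 3 * (A + B) * y * (1 + ξ ^ 2)⁻¹ := by
    intro y hy hy1 ξ
    have h := (convex_Icc ξ (ξ + y)).norm_image_sub_le_of_norm_deriv_le (𝕜 := ℝ)
      (f := f) (C := 3 * (A + B) * (1 + ξ ^ 2)⁻¹) (x := ξ + y) (y := ξ)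
      (fun x _ => f.differentiableAt) ?_ ⟨by linarith, le_rfl⟩ ⟨le_rfl, by linarith⟩
    · rw [show ξ - (ξ + y) = -y by ring, norm_neg, Real.norm_of_nonneg hy.le] at h
      linarith
    · intro x hx
      have hd := hdecay x
      rw [← div_eq_mul_inv, le_div_iff₀ (by positivity)]
      have hsq : 1 + ξ ^ 2 ≤ 3 * (1 + x ^ 2) := by
        nlinarith [hx.1, hx.2, sq_nonneg (2 * x - ξ)]
      calc _ ≤ ‖deriv f x‖ * (3 * (1 + x ^ 2)) := by gcongr
        _ ≤ _ := by linarith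
  have hlarge : ∀ y : ℝ, ∫ ξ : ℝ, ‖f ξ - f (ξ + y)‖ ≤ 2 * ∫ ξ : ℝ, ‖f ξ‖ := by
    intro y
    have hs : Integrable fun ξ : ℝ => f (ξ + y) := hf.comp_add_right y
    calc _ ≤ ∫ ξ : ℝ, (‖f ξ‖ + ‖f (ξ + y)‖) :=
          integral_mono (hf.sub hs).norm (hf.norm.add hs.norm) fun ξ => norm_sub_le _ _
      _ = _ := by
          rw [integral_add hf.norm hs.norm, integral_add_right_eq_self (fun ξ => ‖f ξ‖) y]
          ring
  have hI0 : 0 ≤ ∫ ξ : ℝ, ‖f ξ‖ := integral_nonneg fun _ => norm_nonneg _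
  have hpi := Real.pi_pos
  refine ⟨2 * (∫ ξ : ℝ, ‖f ξ‖) + 3 * (A + B) * Real.pi, fun y hy => ?_⟩
  rcases le_total 1 y with h | h
  · rw [min_eq_left h, mul_one]
    have := hlarge y
    have : 0 ≤ 3 * (A + B) * Real.pi := by positivity
    linarith
  · rw [min_eq_right h]
    have hs : Integrable fun ξ : ℝ => f (ξ + y) := hf.comp_add_right y
    calc _ ≤ ∫ ξ : ℝ, 3 * (A + B) * y * (1 + ξ ^ 2)⁻¹ :=
          integral_mono (hf.sub hs).norm (integrable_inv_one_add_sq.const_mul _) (hsmall y hy h)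
      _ = 3 * (A + B) * Real.pi * y := by
          rw [integral_const_mul, integral_univ_inv_one_add_sq]; ring
      _ ≤ _ := by
          gcongr
          linarith

lemma norm_fourierKernel (k ξ : ℝ) :
    ‖Complex.exp (-(Complex.I * (k : ℂ) * (ξ : ℂ)))‖ = 1 := by
  simp [Complex.norm_exp]

lemma integrable_mul_fourierKernel {g : ℝ → ℂ} (hg : Integrable g) (k : ℝ) :
    Integrable fun ξ : ℝ => g ξ * Complex.exp (-(Complex.I * (k : ℂ) * (ξ : ℂ))) := by
  refine hg.mul_bdd (c := 1) (by fun_prop) (Eventually.of_forall fun ξ => ?_)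
  exact (norm_fourierKernel k ξ).le

lemma FT_shift (f : ℝ → ℂ) (k y : ℝ) :
    FT (fun ξ => f (ξ + y)) k = Complex.exp (-(-(Complex.I * (k : ℂ)) * y)) * FT f k := by
  unfold FT
  rw [← integral_add_right_eq_self
    (fun ξ : ℝ => f ξ * Complex.exp (-(Complex.I * (k : ℂ) * (ξ : ℂ)))) y, ← integral_const_mul]
  congr 1
  ext ξ
  rw [mul_left_comm, ← Complex.exp_add]
  congr 2
  push_cast
  ring

/-- Absolute convergence of the double integral. -/
lemma integrable_marchaud_kernel {α : ℝ} (hα0 : 0 < α) (hα1 : α < 1) (f : SchwartzMap ℝ ℂ)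
    (k : ℝ) :
    Integrable (Function.uncurry fun ξ y : ℝ => (f ξ - f (ξ + y)) / ((y ^ (1 + α) : ℝ) : ℂ) *
      Complex.exp (-(Complex.I * (k : ℂ) * (ξ : ℂ))))
      ((volume : Measure ℝ).prod (volume.restrict (Set.Ioi 0))) := by
  obtain ⟨M, hM⟩ := exists_integral_norm_sub_shift_le f
  have hf : Integrable (f : ℝ → ℂ) := f.integrable
  have hfm : Measurable (f : ℝ → ℂ) := f.continuous.measurable
  have hmeas : Measurable (Function.uncurry fun ξ y : ℝ =>
      (f ξ - f (ξ + y)) / ((y ^ (1 + α) : ℝ) : ℂ) *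
      Complex.exp (-(Complex.I * (k : ℂ) * (ξ : ℂ)))) := by
    unfold Function.uncurry
    fun_prop
  rw [integrable_prod_iff' hmeas.aestronglyMeasurable]
  constructor
  · refine Eventually.of_forall fun y => ?_
    have hs : Integrable fun ξ : ℝ => f (ξ + y) := hf.comp_add_right y
    have hd : Integrable fun ξ : ℝ => (f ξ - f (ξ + y)) / ((y ^ (1 + α) : ℝ) : ℂ) :=
      (hf.sub hs).div_const _
    exact integrable_mul_fourierKernel hd k
  · refine Integrable.mono' ((integrableOn_weight hα0 hα1).const_mul M)
      hmeas.aestronglyMeasurable.norm.prod_swap.integral_prod_right' ?_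
    filter_upwards [ae_restrict_mem measurableSet_Ioi] with y hy
    have hy' : (0 : ℝ) < y := hy
    have hp : 0 < y ^ (1 + α) := Real.rpow_pos_of_pos hy _
    rw [Real.norm_of_nonneg (integral_nonneg fun _ => norm_nonneg _)]
    simp only [Function.uncurry, norm_mul, norm_fourierKernel, mul_one, norm_div,
      Complex.norm_real, Real.norm_of_nonneg hp.le]
    rw [integral_div, ← mul_div_assoc]
    gcongr
    exact hM y hy

/-- for `0 < α < 1` and Schwartz `f`, the forward-shift Marchaud operator has
Fourier symbol `(−ik)^α` (principal branch): its Fourier transform at `k` equals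
`(−ik)^α f̂(k)`. -/
theorem stmt3 (α : ℝ) (hα0 : 0 < α) (hα1 : α < 1) (f : SchwartzMap ℝ ℂ) (k : ℝ) :
    FT (marchaudForward α (⇑f)) k = (-(Complex.I * (k : ℂ))) ^ (α : ℂ) * FT (⇑f) k := by
  have hf : Integrable (f : ℝ → ℂ) := f.integrable
  have hΓ : Real.Gamma (-α) ≠ 0 := by
    refine Real.Gamma_ne_zero fun m hm => ?_
    have h : α = m := by linarith
    rcases Nat.eq_zero_or_pos m with h0 | h0
    · subst h0; simp at h; linarith
    · have : (1 : ℝ) ≤ m := by exact_mod_cast h0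
      linarith
  have hinner : ∀ y : ℝ, ∫ ξ : ℝ, (f ξ - f (ξ + y)) / ((y ^ (1 + α) : ℝ) : ℂ) *
      Complex.exp (-(Complex.I * (k : ℂ) * (ξ : ℂ))) =
      (1 - Complex.exp (-(-(Complex.I * (k : ℂ)) * y))) / ((y ^ (1 + α) : ℝ) : ℂ) * FT f k := by
    intro y
    have hs : Integrable fun ξ : ℝ => f (ξ + y) := hf.comp_add_right y
    have h1 := integrable_mul_fourierKernel hf k
    have h2 := integrable_mul_fourierKernel hs k
    have hsub : ∫ ξ : ℝ, (f ξ * Complex.exp (-(Complex.I * (k : ℂ) * (ξ : ℂ))) -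
        f (ξ + y) * Complex.exp (-(Complex.I * (k : ℂ) * (ξ : ℂ)))) =
        FT f k - Complex.exp (-(-(Complex.I * (k : ℂ)) * y)) * FT f k := by
      rw [integral_sub h1 h2, ← FT_shift]
      rfl
    calc _ = ∫ ξ : ℝ, (f ξ * Complex.exp (-(Complex.I * (k : ℂ) * (ξ : ℂ))) -
        f (ξ + y) * Complex.exp (-(Complex.I * (k : ℂ) * (ξ : ℂ)))) /
          ((y ^ (1 + α) : ℝ) : ℂ) := by
          congr 1; ext ξ; ring
      _ = _ := by rw [integral_div, hsub]; ring
  calc FT (marchaudForward α f) k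
      = ((-1 / Real.Gamma (-α) : ℝ) : ℂ) * ∫ ξ : ℝ, ∫ y in Set.Ioi (0 : ℝ),
          (f ξ - f (ξ + y)) / ((y ^ (1 + α) : ℝ) : ℂ) *
          Complex.exp (-(Complex.I * (k : ℂ) * (ξ : ℂ))) := by
        unfold FT marchaudForward
        rw [← integral_const_mul]
        congr 1
        ext ξ
        rw [integral_mul_const, mul_assoc]
    _ = ((-1 / Real.Gamma (-α) : ℝ) : ℂ) *
          (symbolIntegral α (-(Complex.I * (k : ℂ))) * FT f k) := by
        rw [integral_integral_swap (integrable_marchaud_kernel hα0 hα1 f k)]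
        simp only [hinner]
        rw [integral_mul_const]
        rfl
    _ = _ := by
        rw [symbolIntegral_neg_I_mul hα0 hα1]
        have hΓC : ((Real.Gamma (-α) : ℝ) : ℂ) ≠ 0 := by exact_mod_cast hΓ
        push_cast
        field_simp
end
end

section
/- Let 0<α<1 and let f,g be Schwartz functions on ℝ. Then for every ξ∈ℝ, D^α f·g(ξ) = C_α ∫₀^∞ [f(ξ) g(ξ−y) − f(ξ−y) g(ξ)] / y^{1+α} dy, where C_α = α/Γ(1−α) = −1/Γ(−α). -/
/-!
The bilinear formula follows from the Marchaud representation of a single fractional derivative,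
`D^α f(ξ) = C_α ∫₀^∞ (f(ξ) − f(ξ−y)) y^{−1−α} dy` (`fracDeriv_eq_marchaud`): substituting it for
both `f` and `g`, the terms `f(ξ) g(ξ)` cancel under the integral.

For the Marchaud formula, Fourier inversion gives
`f(ξ) − f(ξ−y) = (2π)⁻¹ ∫ f̂(k) e^{ikξ} (1 − e^{−iky}) dk`. After dividing by `y^{1+α}` the
integrand is dominated on `ℝ × (0, ∞)` by `2 (1 + |k|) |f̂(k)| · min(1, y) y^{−1−α}`, which is
integrable, so Fubini applies and everything reduces to the symbol identity
`∫₀^∞ (1 − e^{−sy}) y^{−1−α} dy = s^α Γ(1−α)/α` at `s = ik` (`integral_kernel_I_mul`).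
For real `s > 0` that identity is an integration by parts; both sides are holomorphic on
`Re s > 0`, so it extends there by the identity theorem, and dominated convergence carries it to
the imaginary axis.
-/

open MeasureTheory

noncomputable section

/-- Spectral fractional derivative `D^α f`, defined via Fourier inversion so that
`F[D^α f](k) = (ik)^α f̂(k)` with the principal branch. -/
def fracDeriv (α : ℝ) (f : ℝ → ℂ) (ξ : ℝ) : ℂ :=
  ((2 * Real.pi : ℝ) : ℂ)⁻¹ *
    ∫ k : ℝ, (Complex.I * (k : ℂ)) ^ (α : ℂ) * FT f k * Complex.exp (Complex.I * (k : ℂ) * (ξ : ℂ))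

/-- Spectral fractional Hirota bilinear operator `D^α f·g := (D^α f) g − f (D^α g)`. -/
def hirotaFrac (α : ℝ) (f g : ℝ → ℂ) (ξ : ℝ) : ℂ :=
  fracDeriv α f ξ * g ξ - f ξ * fracDeriv α g ξ

section Marchaud

open Set Filter Topology

/-! ### The kernel and its integrable majorant -/

/-- The function `min(1, y) y^{−1−α}`, integrable on `(0, ∞)` when `0 < α < 1`; up to constants it
dominates every integrand in `y` below. -/
def majorant (α y : ℝ) : ℝ := min 1 y / y ^ (1 + α)

theorem integrableOn_majorant {α : ℝ} (hα0 : 0 < α) (hα1 : α < 1) :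
    IntegrableOn (majorant α) (Ioi 0) := by
  rw [← Ioc_union_Ioi_eq_Ioi (zero_le_one' ℝ)]
  refine IntegrableOn.union ?_ ?_
  · have h := (intervalIntegral.intervalIntegrable_rpow' (a := 0) (b := 1)
      (r := -α) (by linarith))
    rw [intervalIntegrable_iff_integrableOn_Ioc_of_le zero_le_one] at h
    refine h.congr_fun (fun y hy => ?_) measurableSet_Ioc
    simp only [majorant]
    rw [min_eq_right hy.2, Real.rpow_add hy.1, Real.rpow_one, Real.rpow_neg hy.1.le]
    have := hy.1
    field_simp
  · have h := integrableOn_Ioi_rpow_of_lt (a := -(1 + α)) (c := 1) (by linarith) one_pos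
    refine h.congr_fun (fun y hy => ?_) measurableSet_Ioi
    have hy1 : (1 : ℝ) < y := hy
    simp only [majorant]
    rw [min_eq_left hy1.le, Real.rpow_neg (by linarith)]
    simp

theorem norm_one_sub_exp_le {s : ℂ} (hs : 0 ≤ s.re) {y : ℝ} (hy : 0 < y) :
    ‖1 - Complex.exp (-(s * y))‖ ≤ 2 * (1 + ‖s‖) * min 1 y := by
  have h2 : ‖1 - Complex.exp (-(s * y))‖ ≤ 2 := by
    refine (norm_sub_le _ _).trans ?_
    have : ‖Complex.exp (-(s * y))‖ ≤ 1 := by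
      rw [Complex.norm_exp]
      simp
      positivity
    rw [norm_one]; linarith
  have h3 : ‖1 - Complex.exp (-(s * y))‖ ≤ 2 * (‖s‖ * y) := by
    by_cases h : ‖s‖ * y ≤ 1
    · have hn : ‖-(s * (y : ℂ))‖ = ‖s‖ * y := by simp [abs_of_pos hy]
      rw [norm_sub_rev, ← hn]
      exact Complex.norm_exp_sub_one_le (hn ▸ h)
    · linarith
  rcases le_total 1 y with h | h
  · rw [min_eq_left h]; nlinarith [norm_nonneg s]
  · rw [min_eq_right h]; nlinarith [norm_nonneg s]

/-- The Marchaud kernel `(1 − e^{−sy}) / y^{1+α}` with complex frequency parameter `s`. -/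
def kernel (α : ℝ) (s : ℂ) (y : ℝ) : ℂ :=
  (1 - Complex.exp (-(s * y))) / ((y ^ (1 + α) : ℝ) : ℂ)

theorem norm_kernel_le {α : ℝ} {s : ℂ} (hs : 0 ≤ s.re) {y : ℝ} (hy : 0 < y) :
    ‖kernel α s y‖ ≤ 2 * (1 + ‖s‖) * majorant α y := by
  have hp : 0 < y ^ (1 + α) := Real.rpow_pos_of_pos hy _
  rw [kernel, majorant, norm_div, Complex.norm_real, Real.norm_of_nonneg hp.le, ← mul_div_assoc]
  gcongr
  exact norm_one_sub_exp_le hs hy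

theorem measurable_kernel (α : ℝ) (s : ℂ) : Measurable (kernel α s) := by
  unfold kernel
  fun_prop

theorem integrableOn_kernel {α : ℝ} (hα0 : 0 < α) (hα1 : α < 1) {s : ℂ} (hs : 0 ≤ s.re) :
    IntegrableOn (kernel α s) (Ioi 0) := by
  refine Integrable.mono' ((integrableOn_majorant hα0 hα1).const_mul (2 * (1 + ‖s‖)))
    (measurable_kernel α s).aestronglyMeasurable ?_
  filter_upwards [ae_restrict_mem measurableSet_Ioi] with y hy
  exact norm_kernel_le hs hy

/-! ### The symbol identity -/

/-- The symbol identity at real `s = r > 0`: integration by parts against `−y^{−α}/α` leaves a Gamma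
integral. -/
theorem integral_kernel_real {α : ℝ} (hα0 : 0 < α) (hα1 : α < 1) {r : ℝ} (hr : 0 < r) :
    ∫ y in Ioi (0 : ℝ), (1 - Real.exp (-(r * y))) / y ^ (1 + α)
      = r ^ α * (Real.Gamma (1 - α) / α) := by
  have hrx : ∀ x : ℝ, 0 < x → 0 ≤ 1 - Real.exp (-(r * x)) := fun x hx => by
    have : Real.exp (-(r * x)) ≤ 1 := Real.exp_le_one_iff.2 (by nlinarith)
    linarith
  have hrx' : ∀ x : ℝ, 1 - Real.exp (-(r * x)) ≤ r * x := fun x => by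
    have := Real.add_one_le_exp (-(r * x)); linarith
  have key := integral_Ioi_mul_deriv_eq_deriv_mul (a := 0) (a' := (0 : ℝ)) (b' := 0)
    (u := fun x : ℝ => 1 - Real.exp (-(r * x))) (u' := fun x => r * Real.exp (-(r * x)))
    (v := fun x : ℝ => -(x ^ (-α)) / α) (v' := fun x => 1 / x ^ (1 + α)) ?_ ?_ ?_ ?_ ?_ ?_
  · have e1 : ∀ x : ℝ, (1 - Real.exp (-(r * x))) / x ^ (1 + α)
        = (1 - Real.exp (-(r * x))) * (1 / x ^ (1 + α)) := fun x => by ring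
    simp_rw [e1]
    rw [key]
    have e2 : ∀ x : ℝ, r * Real.exp (-(r * x)) * (-(x ^ (-α)) / α)
        = (-(r / α)) * (x ^ ((1 - α) - 1) * Real.exp (-(r * x))) := fun x => by
      rw [show (1 - α) - 1 = -α by ring]; ring
    simp_rw [e2]
    rw [integral_const_mul, Real.integral_rpow_mul_exp_neg_mul_Ioi (by linarith) hr]
    rw [one_div, Real.inv_rpow hr.le, ← Real.rpow_neg hr.le, neg_sub, Real.rpow_sub hr,
      Real.rpow_one]
    field_simp
    ring
  · intro x _
    have h := (((hasDerivAt_id x).const_mul r).neg.exp).const_sub 1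
    refine h.congr_deriv ?_
    simp; ring
  · intro x hx
    have hx0 : (0 : ℝ) < x := hx
    have h := ((Real.hasDerivAt_rpow_const (x := x) (p := -α) (Or.inl hx0.ne')).neg).div_const α
    refine h.congr_deriv ?_
    rw [show -α - 1 = -(1 + α) by ring, Real.rpow_neg hx0.le]
    field_simp
  · refine Integrable.mono' ((integrableOn_majorant hα0 hα1).const_mul (1 + r))
      (by apply Measurable.aestronglyMeasurable; fun_prop) ?_
    filter_upwards [ae_restrict_mem measurableSet_Ioi] with y hy
    have hy0 : (0 : ℝ) < y := hy
    have hp : 0 < y ^ (1 + α) := Real.rpow_pos_of_pos hy0 _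
    rw [Pi.mul_apply, Real.norm_of_nonneg (mul_nonneg (hrx y hy0) (by positivity)), majorant,
      mul_one_div, ← mul_div_assoc]
    gcongr
    rcases le_total 1 y with h | h
    · rw [min_eq_left h]; nlinarith [Real.exp_pos (-(r * y))]
    · rw [min_eq_right h]; nlinarith [hrx' y]
  · have h := (Real.GammaIntegral_convergent (s := 1 - α) (by linarith))
    have h2 := ((integrableOn_Ioi_comp_mul_left_iff
      (fun x : ℝ => Real.exp (-x) * x ^ (1 - α - 1)) 0 hr).2 (by simpa using h)).const_mul
      (- (r / α) * r ^ α)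
    refine IntegrableOn.congr_fun h2 (fun x hx => ?_) measurableSet_Ioi
    have hx0 : (0 : ℝ) < x := hx
    simp only [Pi.mul_apply]
    rw [show (1 - α) - 1 = -α by ring, Real.mul_rpow hr.le hx0.le, Real.rpow_neg hr.le]
    have : 0 < r ^ α := Real.rpow_pos_of_pos hr _
    field_simp
  · have hl : Tendsto (fun x : ℝ => r / α * x ^ (1 - α)) (𝓝[>] 0) (𝓝 0) := by
      have : ContinuousAt (fun x : ℝ => r / α * x ^ (1 - α)) 0 :=
        (Real.continuousAt_rpow_const 0 _ (Or.inr (by linarith))).const_mul _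
      have h := this.tendsto
      simp only [Real.zero_rpow (by linarith : (1 - α) ≠ 0), mul_zero] at h
      exact h.mono_left nhdsWithin_le_nhds
    refine squeeze_zero_norm' ?_ hl
    filter_upwards [self_mem_nhdsWithin] with x hx
    have hx0 : (0 : ℝ) < x := hx
    have hp : 0 < x ^ α := Real.rpow_pos_of_pos hx0 _
    simp only [Pi.mul_apply]
    rw [norm_mul, norm_div, norm_neg, Real.norm_of_nonneg (hrx x hx0),
      Real.norm_of_nonneg hα0.le, Real.norm_of_nonneg (by positivity), Real.rpow_sub hx0,
      Real.rpow_one, Real.rpow_neg hx0.le]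
    calc _ ≤ r * x * ((x ^ α)⁻¹ / α) := by gcongr; exact hrx' x
      _ = _ := by ring
  · have hl : Tendsto (fun x : ℝ => x ^ (-α) / α) atTop (𝓝 0) := by
      simpa using (tendsto_rpow_neg_atTop hα0).div_const α
    refine squeeze_zero_norm' ?_ hl
    filter_upwards [eventually_gt_atTop 0] with x hx0
    simp only [Pi.mul_apply]
    rw [norm_mul, norm_div, norm_neg, Real.norm_of_nonneg (hrx x hx0),
      Real.norm_of_nonneg hα0.le, Real.norm_of_nonneg (by positivity)]
    refine mul_le_of_le_one_left (by positivity) ?_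
    linarith [Real.exp_pos (-(r * x))]

theorem integral_kernel_ofReal {α : ℝ} (hα0 : 0 < α) (hα1 : α < 1) {r : ℝ} (hr : 0 < r) :
    ∫ y in Ioi (0 : ℝ), kernel α r y
      = (r : ℂ) ^ (α : ℂ) * ((Real.Gamma (1 - α) / α : ℝ) : ℂ) := by
  rw [← Complex.ofReal_cpow hr.le, ← Complex.ofReal_mul, ← integral_kernel_real hα0 hα1 hr,
    ← integral_complex_ofReal]
  simp [kernel]

/-- Differentiation under the integral sign; on `Re z > Re s / 2` the derivative of the integrand is
dominated by `y^{−α} e^{−(Re s / 2) y}`. -/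
theorem differentiableAt_integral_kernel {α : ℝ} (hα0 : 0 < α) (hα1 : α < 1) {s : ℂ}
    (hs : 0 < s.re) :
    DifferentiableAt ℂ (fun s => ∫ y in Ioi (0 : ℝ), kernel α s y) s := by
  have hopen : IsOpen {z : ℂ | s.re / 2 < z.re} := isOpen_lt continuous_const Complex.continuous_re
  have hmem : {z : ℂ | s.re / 2 < z.re} ∈ 𝓝 s := hopen.mem_nhds (by simp; linarith)
  have hb : IntegrableOn (fun y : ℝ => y ^ (-α) * Real.exp (-(s.re / 2) * y)) (Ioi 0) := by
    simpa using integrableOn_rpow_mul_exp_neg_mul_rpow (p := 1) (s := -α) (b := s.re / 2)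
      (by linarith) one_pos (by linarith)
  refine (hasDerivAt_integral_of_dominated_loc_of_deriv_le hmem
    (F' := fun z y => (y * Complex.exp (-(z * y))) / ((y ^ (1 + α) : ℝ) : ℂ))
    (.of_forall fun z => (measurable_kernel α z).aestronglyMeasurable)
    (integrableOn_kernel hα0 hα1 hs.le)
    (by apply Measurable.aestronglyMeasurable; fun_prop) ?_ hb ?_).2.differentiableAt
  · filter_upwards [ae_restrict_mem measurableSet_Ioi] with y hy z hz
    have hy0 : (0 : ℝ) < y := hy
    have hz' : s.re / 2 < z.re := hz
    have hp : 0 < y ^ α := Real.rpow_pos_of_pos hy0 _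
    rw [norm_div, norm_mul, Complex.norm_real, Complex.norm_real, Complex.norm_exp,
      Real.norm_of_nonneg hy0.le, Real.norm_of_nonneg (by positivity), Real.rpow_add hy0,
      Real.rpow_one, Real.rpow_neg hy0.le]
    have : Real.exp (-(z * y)).re ≤ Real.exp (-(s.re / 2) * y) := by
      apply Real.exp_le_exp.2
      simp
      nlinarith
    rw [mul_div_mul_left _ _ hy0.ne', div_eq_inv_mul]
    gcongr
  · refine .of_forall fun y z _ => ?_
    unfold kernel
    have h := ((((hasDerivAt_id z).mul_const (y : ℂ)).neg.cexp).const_sub 1).div_const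
      ((y ^ (1 + α) : ℝ) : ℂ)
    refine h.congr_deriv ?_
    simp; ring

/-- Extension of the symbol identity from the positive reals to the right half-plane by the identity
theorem. -/
theorem integral_kernel_of_re_pos {α : ℝ} (hα0 : 0 < α) (hα1 : α < 1) {s : ℂ} (hs : 0 < s.re) :
    ∫ y in Ioi (0 : ℝ), kernel α s y
      = s ^ (α : ℂ) * ((Real.Gamma (1 - α) / α : ℝ) : ℂ) := by
  have hopen : IsOpen {z : ℂ | 0 < z.re} := isOpen_lt continuous_const Complex.continuous_re
  refine AnalyticOnNhd.eqOn_of_preconnected_of_frequently_eq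
    (f := fun s => ∫ y in Ioi (0 : ℝ), kernel α s y)
    (g := fun s => s ^ (α : ℂ) * ((Real.Gamma (1 - α) / α : ℝ) : ℂ))
    (U := {z : ℂ | 0 < z.re}) (z₀ := ((1 : ℝ) : ℂ)) ?_ ?_
    (convex_halfSpace_re_gt 0).isPreconnected (by simp) ?_ hs
  · refine DifferentiableOn.analyticOnNhd (fun z hz => ?_) hopen
    exact (differentiableAt_integral_kernel hα0 hα1 hz).differentiableWithinAt
  · refine DifferentiableOn.analyticOnNhd (fun z hz => ?_) hopen
    refine DifferentiableAt.differentiableWithinAt ?_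
    exact ((differentiableAt_id.cpow_const (Or.inl hz))).mul_const _
  · have ht : Tendsto (fun t : ℝ => (t : ℂ)) (𝓝[≠] 1) (𝓝[≠] ((1 : ℝ) : ℂ)) :=
      Complex.continuous_ofReal.continuousAt.continuousWithinAt.tendsto_nhdsWithin
        (fun t ht => by simpa using ht)
    refine ht.frequently (Eventually.frequently ?_)
    have : ∀ᶠ t : ℝ in 𝓝[≠] 1, 0 < t := nhdsWithin_le_nhds (lt_mem_nhds one_pos)
    filter_upwards [this] with t ht
    exact integral_kernel_ofReal hα0 hα1 ht

/-- The symbol identity on the imaginary axis, as the limit of the one at `ik + ε` for `ε → 0⁺`. -/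
theorem integral_kernel_I_mul {α : ℝ} (hα0 : 0 < α) (hα1 : α < 1) (k : ℝ) :
    ∫ y in Ioi (0 : ℝ), kernel α (Complex.I * k) y
      = (Complex.I * k) ^ (α : ℂ) * ((Real.Gamma (1 - α) / α : ℝ) : ℂ) := by
  rcases eq_or_ne k 0 with rfl | hk
  · have : (α : ℂ) ≠ 0 := by exact_mod_cast hα0.ne'
    simp [kernel, Complex.zero_cpow this]
  have hlim : Tendsto (fun ε : ℝ => Complex.I * k + ε) (𝓝[>] 0) (𝓝 (Complex.I * k)) := by
    have : Continuous (fun ε : ℝ => Complex.I * k + ε) := by fun_prop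
    have h := this.tendsto 0
    simp only [Complex.ofReal_zero, add_zero] at h
    exact h.mono_left nhdsWithin_le_nhds
  have h1 : Tendsto (fun ε : ℝ => ∫ y in Ioi (0 : ℝ), kernel α (Complex.I * k + ε) y) (𝓝[>] 0)
      (𝓝 (∫ y in Ioi (0 : ℝ), kernel α (Complex.I * k) y)) := by
    refine tendsto_integral_filter_of_dominated_convergence
      (fun y => 2 * (1 + (|k| + 1)) * majorant α y)
      (.of_forall fun ε => (measurable_kernel α _).aestronglyMeasurable) ?_
      ((integrableOn_majorant hα0 hα1).const_mul _) ?_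
    · filter_upwards [self_mem_nhdsWithin, nhdsWithin_le_nhds (gt_mem_nhds one_pos)] with ε hε hε1
      have hε0 : (0 : ℝ) < ε := hε
      filter_upwards [ae_restrict_mem measurableSet_Ioi] with y hy
      have hy0 : (0 : ℝ) < y := hy
      refine (norm_kernel_le (by simpa using hε0.le) hy0).trans ?_
      have hn : ‖Complex.I * k + ε‖ ≤ |k| + 1 := by
        refine (norm_add_le _ _).trans ?_
        simp [abs_of_pos hε0]
        exact hε1.le
      have : 0 ≤ majorant α y := div_nonneg (by positivity) (by positivity)
      gcongr
    · refine .of_forall fun y => ?_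
      have : Continuous (fun s : ℂ => kernel α s y) := by unfold kernel; fun_prop
      exact (this.tendsto _).comp hlim
  have h2 : Tendsto (fun ε : ℝ => ∫ y in Ioi (0 : ℝ), kernel α (Complex.I * k + ε) y) (𝓝[>] 0)
      (𝓝 ((Complex.I * k) ^ (α : ℂ) * ((Real.Gamma (1 - α) / α : ℝ) : ℂ))) := by
    have hc : ContinuousAt (fun s : ℂ => s ^ (α : ℂ)) (Complex.I * k) :=
      continuousAt_cpow_const (Or.inr (by simpa using hk))
    refine ((hc.tendsto.comp hlim).mul_const _).congr' ?_
    filter_upwards [self_mem_nhdsWithin] with ε hε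
    exact (integral_kernel_of_re_pos hα0 hα1 (by simpa using hε)).symm
  exact tendsto_nhds_unique h1 h2

/-! ### Fourier inversion in the angular-frequency convention -/

open scoped FourierTransform in
theorem FT_eq_fourier (f : SchwartzMap ℝ ℂ) (k : ℝ) :
    FT f k = (𝓕 f : SchwartzMap ℝ ℂ) (k / (2 * Real.pi)) := by
  rw [SchwartzMap.fourier_coe, Real.fourier_real_eq_integral_exp_smul, FT]
  refine integral_congr_ae (.of_forall fun x => ?_)
  simp only [smul_eq_mul]
  rw [mul_comm]
  congr 2
  have : (Real.pi : ℂ) ≠ 0 := by exact_mod_cast Real.pi_ne_zero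
  push_cast
  field_simp

theorem continuous_FT (f : SchwartzMap ℝ ℂ) : Continuous (FT f) := by
  rw [show FT f = _ from funext (FT_eq_fourier f)]
  exact (SchwartzMap.continuous _).comp (by fun_prop)

theorem integrable_FT (f : SchwartzMap ℝ ℂ) : Integrable (FT f) := by
  rw [show FT f = _ from funext (FT_eq_fourier f)]
  exact (SchwartzMap.integrable _).comp_div (by positivity)

theorem integrable_one_add_abs_mul_norm_FT (f : SchwartzMap ℝ ℂ) :
    Integrable (fun k => (1 + |k|) * ‖FT f k‖) := by
  have h := ((SchwartzMap.integrable_pow_mul volume (FourierTransform.fourier f) 1).comp_div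
    (R := 2 * Real.pi) (by positivity)).const_mul (2 * Real.pi)
  refine ((integrable_FT f).norm.add h).congr (.of_forall fun k => ?_)
  have := Real.pi_pos
  simp only [Pi.add_apply, FT_eq_fourier, pow_one, norm_div, Real.norm_eq_abs, abs_mul,
    abs_of_pos this, abs_two]
  field_simp

open scoped FourierTransform in
theorem integral_FT_mul_exp (f : SchwartzMap ℝ ℂ) (x : ℝ) :
    ∫ k : ℝ, FT f k * Complex.exp (Complex.I * k * x) = ((2 * Real.pi : ℝ) : ℂ) * f x := by
  have hinv : f x = 𝓕⁻ (𝓕 f : SchwartzMap ℝ ℂ) x := by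
    rw [FourierTransform.fourierInv_fourier_eq]
  rw [hinv, SchwartzMap.fourierInv_coe, Real.fourierInv_eq']
  have h := Measure.integral_comp_div
    (fun v : ℝ => Complex.exp (((2 * Real.pi * inner ℝ v x : ℝ) : ℂ) * Complex.I)
      • (𝓕 f : SchwartzMap ℝ ℂ) v) (2 * Real.pi)
  rw [abs_of_pos (by positivity), Complex.real_smul] at h
  rw [← h]
  refine integral_congr_ae (.of_forall fun k => ?_)
  simp only [smul_eq_mul, FT_eq_fourier]
  rw [mul_comm]
  congr 2
  have : (Real.pi : ℂ) ≠ 0 := by exact_mod_cast Real.pi_ne_zero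
  simp only [RCLike.inner_apply, conj_trivial]
  push_cast
  field_simp

/-! ### The Marchaud representation -/

/-- The absolute integrability that justifies exchanging the `k` and `y` integrals. -/
theorem integrable_prod_FT_mul_kernel {α : ℝ} (hα0 : 0 < α) (hα1 : α < 1) (f : SchwartzMap ℝ ℂ)
    (ξ : ℝ) :
    Integrable (Function.uncurry fun k y : ℝ =>
      FT f k * Complex.exp (Complex.I * k * ξ) * kernel α (Complex.I * k) y)
      (volume.prod (volume.restrict (Ioi 0))) := by
  have hdom := ((integrable_one_add_abs_mul_norm_FT f).mul_prod
    (integrableOn_majorant hα0 hα1)).const_mul 2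
  refine hdom.mono' ?_ ?_
  · apply Measurable.aestronglyMeasurable
    have := (continuous_FT f).measurable
    unfold kernel Function.uncurry
    fun_prop
  · have hpos : ∀ᵐ z : ℝ × ℝ ∂(volume.prod (volume.restrict (Ioi 0))), z.2 ∈ Ioi (0 : ℝ) :=
      Measure.quasiMeasurePreserving_snd.ae (ae_restrict_mem measurableSet_Ioi)
    filter_upwards [hpos] with ⟨k, y⟩ hy
    have hk := norm_kernel_le (α := α) (s := Complex.I * k) (by simp) hy
    have he : ‖Complex.exp (Complex.I * k * ξ)‖ = 1 := by
      rw [Complex.norm_exp]; simp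
    simp only [Function.uncurry_apply_pair, norm_mul, he, mul_one]
    simp only [norm_mul, Complex.norm_I, one_mul, Complex.norm_real, Real.norm_eq_abs] at hk
    calc _ ≤ ‖FT f k‖ * (2 * (1 + |k|) * majorant α y) := by gcongr
      _ = _ := by ring

/-- Integrating out `k` first: Fourier inversion at `ξ` and at `ξ − y`. -/
theorem integral_FT_mul_kernel (α : ℝ) (f : SchwartzMap ℝ ℂ) (ξ y : ℝ) :
    ∫ k : ℝ, FT f k * Complex.exp (Complex.I * k * ξ) * kernel α (Complex.I * k) y
      = ((2 * Real.pi : ℝ) : ℂ) * ((f ξ - f (ξ - y)) / ((y ^ (1 + α) : ℝ) : ℂ)) := by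
  have hint : ∀ x : ℝ, Integrable fun k : ℝ => FT f k * Complex.exp (Complex.I * k * x) := by
    intro x
    refine (integrable_FT f).norm.mono'
      ((continuous_FT f).mul (by fun_prop)).aestronglyMeasurable (.of_forall fun k => ?_)
    rw [norm_mul, Complex.norm_exp]
    simp
  rw [← mul_div_assoc, mul_sub, ← integral_FT_mul_exp, ← integral_FT_mul_exp,
    ← integral_sub (hint _) (hint _), ← integral_div]
  refine integral_congr_ae (.of_forall fun k => ?_)
  have he : Complex.exp (Complex.I * k * ((ξ - y : ℝ) : ℂ))
      = Complex.exp (Complex.I * k * ξ) * Complex.exp (-(Complex.I * k * y)) := by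
    rw [← Complex.exp_add]; congr 1; push_cast; ring
  simp only [kernel, he]
  ring

theorem integrableOn_marchaud {α : ℝ} (hα0 : 0 < α) (hα1 : α < 1) (f : SchwartzMap ℝ ℂ) (ξ : ℝ) :
    IntegrableOn (fun y : ℝ => (f ξ - f (ξ - y)) / ((y ^ (1 + α) : ℝ) : ℂ)) (Ioi 0) := by
  have h := (integrable_prod_FT_mul_kernel hα0 hα1 f ξ).integral_prod_right
  simp only [Function.uncurry_apply_pair, integral_FT_mul_kernel] at h
  have hpi : ((2 * Real.pi : ℝ) : ℂ) ≠ 0 := by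
    exact_mod_cast (by positivity : (2 * Real.pi : ℝ) ≠ 0)
  exact (integrable_const_mul_iff (IsUnit.mk0 _ hpi) _).1 h

/-- Integrating out `y` first produces the symbol `(ik)^α Γ(1−α)/α`, hence a multiple of `D^α f`. -/
theorem fracDeriv_eq_marchaud {α : ℝ} (hα0 : 0 < α) (hα1 : α < 1) (f : SchwartzMap ℝ ℂ) (ξ : ℝ) :
    fracDeriv α f ξ = ((α / Real.Gamma (1 - α) : ℝ) : ℂ) *
      ∫ y in Ioi (0 : ℝ), (f ξ - f (ξ - y)) / ((y ^ (1 + α) : ℝ) : ℂ) := by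
  have hswap := integral_integral_swap (integrable_prod_FT_mul_kernel hα0 hα1 f ξ)
  simp only [integral_FT_mul_kernel, integral_const_mul, integral_kernel_I_mul hα0 hα1] at hswap
  have hre : ∀ k : ℝ, FT f k * Complex.exp (Complex.I * k * ξ) *
      ((Complex.I * k) ^ (α : ℂ) * ((Real.Gamma (1 - α) / α : ℝ) : ℂ))
      = ((Real.Gamma (1 - α) / α : ℝ) : ℂ) *
        ((Complex.I * k) ^ (α : ℂ) * FT f k * Complex.exp (Complex.I * k * ξ)) := fun k => by ring
  simp only [hre, integral_const_mul] at hswap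
  have hpi : ((2 * Real.pi : ℝ) : ℂ) ≠ 0 := by
    exact_mod_cast (by positivity : (2 * Real.pi : ℝ) ≠ 0)
  have hα : (α : ℂ) ≠ 0 := by exact_mod_cast hα0.ne'
  have hΓ : ((Real.Gamma (1 - α) : ℝ) : ℂ) ≠ 0 := by
    exact_mod_cast (Real.Gamma_pos_of_pos (by linarith)).ne'
  rw [fracDeriv, inv_mul_eq_iff_eq_mul₀ hpi, mul_left_comm, ← hswap, ← mul_assoc]
  rw [Complex.ofReal_div, Complex.ofReal_div, div_mul_div_cancel₀ hΓ, div_self hα, one_mul]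

end Marchaud

/-- for `0 < α < 1` and Schwartz `f, g`, the bilinear operator has the
Marchaud-type kernel representation
`D^α f·g(ξ) = C_α ∫₀^∞ (f(ξ)g(ξ−y) − f(ξ−y)g(ξ)) y^{−1−α} dy`,
with `C_α = α/Γ(1−α) = −1/Γ(−α)`. -/
theorem stmt4 (α : ℝ) (hα0 : 0 < α) (hα1 : α < 1) (f g : SchwartzMap ℝ ℂ) (ξ : ℝ) :
    (α / Real.Gamma (1 - α)) = -1 / Real.Gamma (-α) ∧
    hirotaFrac α (⇑f) (⇑g) ξ =
      ((α / Real.Gamma (1 - α) : ℝ) : ℂ) *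
        ∫ y in Set.Ioi (0 : ℝ),
          (f ξ * g (ξ - y) - f (ξ - y) * g ξ) / ((y ^ (1 + α) : ℝ) : ℂ) := by
  refine ⟨?_, ?_⟩
  · have h := Real.Gamma_add_one (s := -α) (by linarith)
    rw [show -α + 1 = 1 - α by ring] at h
    have hΓ : 0 < Real.Gamma (1 - α) := Real.Gamma_pos_of_pos (by linarith)
    have h0 : Real.Gamma (-α) ≠ 0 := fun h0 => by simp [h0] at h; linarith
    rw [div_eq_div_iff hΓ.ne' h0, h]
    ring
  · rw [hirotaFrac, fracDeriv_eq_marchaud hα0 hα1, fracDeriv_eq_marchaud hα0 hα1, mul_assoc,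
      mul_left_comm (f ξ), ← mul_sub, ← integral_mul_const, ← integral_const_mul,
      ← integral_sub ((integrableOn_marchaud hα0 hα1 f ξ).mul_const _)
        ((integrableOn_marchaud hα0 hα1 g ξ).const_mul _)]
    congr 1
    refine integral_congr_ae (.of_forall fun y => ?_)
    ring
end
end
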